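/- Let D be a minimal strong digraph (MSD), C_q a directed cycle of length q contained in D, and D' the digraph obtained from D by deleting all arcs of C_q. Then every non-trivial strong component of D' that contains at most one vertex of C_q contains at least one vertex that is linear in D. -/

import Mathlib

/-- A digraph (given by its arc relation `A`) is strongly connected if every vertex
can reach every vertex by a directed path. -/
def StronglyConnected {V : Type*} (A : V → V → Prop) : Prop :=
  ∀ u v : V, Relation.ReflTransGen A u v

/-- A minimal strong digraph: strongly connected, and deleting any arc destroys
strong connectivity. -/
def IsMSD {V : Type*} (A : V → V → Prop) : Prop :=
  StronglyConnected A ∧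
    ∀ a b : V, A a b →
      ¬ StronglyConnected (fun x y => A x y ∧ ¬(x = a ∧ y = b))

/-- `c : ZMod q → V` describes a directed cycle of length `q` contained in the digraph `A`. -/
def IsCycleIn {V : Type*} (A : V → V → Prop) (q : ℕ) (c : ZMod q → V) : Prop :=
  2 ≤ q ∧ Function.Injective c ∧ ∀ i : ZMod q, A (c i) (c (i + 1))

/-- The digraph `D'` obtained from `A` by deleting all arcs of the cycle `c`. -/
def DelCycle {V : Type*} (A : V → V → Prop) (q : ℕ) (c : ZMod q → V) : V → V → Prop :=
  fun x y => A x y ∧ ¬ ∃ i : ZMod q, x = c i ∧ y = c (i + 1)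

/-- Mutual reachability of two vertices. -/
def MutReach {V : Type*} (A : V → V → Prop) (u v : V) : Prop :=
  Relation.ReflTransGen A u v ∧ Relation.ReflTransGen A v u

/-- `S` is (the vertex set of) a strong component of the digraph `A`. -/
def IsSC {V : Type*} (A : V → V → Prop) (S : Set V) : Prop :=
  ∃ v : V, S = {u | MutReach A v u}

/-- Indegree of `v`. -/
noncomputable def indeg {V : Type*} (A : V → V → Prop) (v : V) : ℕ := {u | A u v}.ncard

/-- Outdegree of `v`. -/
noncomputable def outdeg {V : Type*} (A : V → V → Prop) (v : V) : ℕ := {u | A v u}.ncard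

/-- A vertex is linear if its indegree and outdegree both equal 1. -/
def IsLinear {V : Type*} (A : V → V → Prop) (v : V) : Prop :=
  indeg A v = 1 ∧ outdeg A v = 1

/-- A vertex `v` is a cut point if deleting `v` (and its incident arcs) leaves a
digraph whose underlying graph is disconnected. -/
def IsCutPoint {V : Type*} (A : V → V → Prop) (v : V) : Prop :=
  ∃ x y : V, x ≠ v ∧ y ≠ v ∧
    ¬ Relation.ReflTransGen (fun a b => a ≠ v ∧ b ≠ v ∧ (A a b ∨ A b a)) x y

/-- Adjacency in the condensation (Hasse diagram) of the digraph `A`: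
two distinct strong components with an arc from the first to the second. -/
def HAdj {V : Type*} (A : V → V → Prop) (S T : Set V) : Prop :=
  IsSC A S ∧ IsSC A T ∧ S ≠ T ∧ ∃ u ∈ S, ∃ v ∈ T, A u v

noncomputable def HIndeg {V : Type*} (A : V → V → Prop) (S : Set V) : ℕ := {T : Set V | HAdj A T S}.ncard
noncomputable def HOutdeg {V : Type*} (A : V → V → Prop) (S : Set V) : ℕ := {T : Set V | HAdj A S T}.ncard

/-- A vertex of the Hasse diagram is linear if its indegree and outdegree there equal 1. -/
def HLinear {V : Type*} (A : V → V → Prop) (S : Set V) : Prop :=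
  HIndeg A S = 1 ∧ HOutdeg A S = 1

/-- Four elements of `ZMod q` appear in this cyclic order (all distinct). -/
def CyclicOrder4 {q : ℕ} (a b c d : ZMod q) : Prop :=
  0 < (b - a).val ∧ (b - a).val < (c - a).val ∧ (c - a).val < (d - a).val

open Function Relation Set

/-!
Contract everything outside `S`, together with `C_q`, to a single vertex `w`. Since `S` is a strong
component of `D'`, an arc of `S` that is redundant after the contraction is already redundant in
`D`, so minimality survives for the arcs of `S`.

Take a maximal proper strong subdigraph `X` of the contraction containing `w`, and an ear of `X`.
By maximality the ear covers all vertices outside `X`, and by minimality it contains every arc of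
`S` that is not inside `X`; in particular its two ends lie in `S`. If no inner vertex of the ear
were linear, each would have a neighbour outside `S`. Then somewhere along the ear a vertex that has
an exit from `S` (or is the initial end) is followed by one that has an entrance from outside `S`
(or is the terminal end), and the ear arc joining the two is redundant, a contradiction.
-/

section

variable {V : Type*} {A B E F : V → V → Prop} {K S W X Y : Set V} {v x y : V}

/-! ### Walks -/

theorem reflTransGen_of_walk {p : ℕ → V} {i j : ℕ} (hij : i ≤ j)
    (hp : ∀ m, i ≤ m → m < j → E (p m) (p (m + 1))) : ReflTransGen E (p i) (p j) :=
  (reflTransGen_of_succ_of_le (fun k l ↦ E (p k) (p l))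
    (fun m hm ↦ hp m hm.1 hm.2) hij).lift p fun _ _ h ↦ h

theorem exists_injOn_walk (h : ReflTransGen E x y) :
    ∃ (n : ℕ) (p : ℕ → V), p 0 = x ∧ p n = y ∧ (∀ i < n, E (p i) (p (i + 1))) ∧
      InjOn p (Iic n) := by
  induction h using ReflTransGen.head_induction_on with
  | refl => exact ⟨0, fun _ ↦ y, rfl, rfl, by simp, fun i hi j hj _ ↦ by simp_all⟩
  | @head x z hxz _ ih =>
    obtain ⟨n, p, hp0, hpn, hp, hinj⟩ := ih
    by_cases hx : x ∈ p '' Iic n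
    · obtain ⟨k, hk : k ≤ n, rfl⟩ := hx
      refine ⟨n - k, fun i ↦ p (i + k), by simp, by simp [hk, hpn], fun i hi ↦ ?_, ?_⟩
      · simpa only [Nat.add_right_comm] using hp (i + k) (by lia)
      · intro i (hi : i ≤ n - k) j (hj : j ≤ n - k) hij
        have : i + k = j + k := hinj (show i + k ≤ n by lia) (show j + k ≤ n by lia) hij
        lia
    · refine ⟨n + 1, fun | 0 => x | i + 1 => p i, rfl, hpn, ?_, ?_⟩
      · rintro (_ | i) hi
        · change E x (p 0)
          rwa [hp0]
        · exact hp i (by lia)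
      · rintro (_ | i) hi (_ | j) hj hij
        · rfl
        · exact absurd ⟨j, Nat.le_of_succ_le_succ hj, hij.symm⟩ hx
        · exact absurd ⟨i, Nat.le_of_succ_le_succ hi, hij⟩ hx
        · exact congrArg _ (hinj (Nat.le_of_succ_le_succ hi) (Nat.le_of_succ_le_succ hj) hij)

theorem exists_reflTransGen_first_mem (h : ReflTransGen E x y) (hy : y ∈ X) :
    ∃ z ∈ X, ReflTransGen (fun a b ↦ E a b ∧ a ∉ X) x z := by
  induction h using ReflTransGen.head_induction_on with
  | refl => exact ⟨y, hy, .refl⟩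
  | @head x z hxz _ ih =>
    by_cases hx : x ∈ X
    · exact ⟨x, hx, .refl⟩
    · obtain ⟨t, ht, hzt⟩ := ih
      exact ⟨t, ht, .head ⟨hxz, hx⟩ hzt⟩

theorem exists_arc_mem_notMem (h : ReflTransGen E x y) (hx : x ∈ X) (hy : y ∉ X) :
    ∃ a ∈ X, ∃ b ∉ X, E a b := by
  obtain ⟨b, hb, hxb⟩ := exists_reflTransGen_first_mem (X := Xᶜ) h hy
  rcases hxb.cases_tail with rfl | ⟨a, -, hab, ha⟩
  · exact absurd hx hb
  · exact ⟨a, not_not.1 ha, b, hb, hab⟩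

/-! ### Strong subdigraphs -/

/-- The subdigraph of `E` induced by the vertex set `X`, as a digraph on all of `V` in which the
vertices outside `X` are isolated. -/
def Induce (E : V → V → Prop) (X : Set V) : V → V → Prop :=
  fun x y ↦ E x y ∧ x ∈ X ∧ y ∈ X

/-- The subdigraph of `E` induced by `X` is strongly connected. -/
def IsStrongOn (E : V → V → Prop) (X : Set V) : Prop :=
  ∀ x ∈ X, ∀ y ∈ X, ReflTransGen (Induce E X) x y

theorem induce_mono (hXY : X ⊆ Y) : Induce E X ≤ Induce E Y :=
  fun _ _ h ↦ ⟨h.1, hXY h.2.1, hXY h.2.2⟩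

theorem IsStrongOn.of_induce_le (hE : IsStrongOn E X) (h : Induce E X ≤ B) : IsStrongOn B X :=
  fun x hx y hy ↦ ReflTransGen.mono (fun a b hab ↦ ⟨h a b hab, hab.2⟩) x y (hE x hx y hy)

theorem IsStrongOn.of_reach (hX : IsStrongOn E X) (hXY : X ⊆ Y)
    (hto : ∀ y ∈ Y, ∃ x ∈ X, ReflTransGen (Induce E Y) y x)
    (hfrom : ∀ y ∈ Y, ∃ x ∈ X, ReflTransGen (Induce E Y) x y) : IsStrongOn E Y := by
  intro u hu v hv
  obtain ⟨x, hx, hux⟩ := hto u hu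
  obtain ⟨y, hy, hyv⟩ := hfrom v hv
  exact hux.trans ((ReflTransGen.mono (induce_mono hXY) x y (hX x hx y hy)).trans hyv)

theorem isStrongOn_univ : IsStrongOn E univ ↔ StronglyConnected E := by
  have : Induce E univ = E := by
    funext x y
    simp only [Induce, mem_univ, and_true]
  simp only [IsStrongOn, StronglyConnected, this, mem_univ, forall_const]

theorem StronglyConnected.mono (hE : StronglyConnected E) (h : E ≤ B) : StronglyConnected B :=
  fun u v ↦ ReflTransGen.mono h u v (hE u v)

theorem StronglyConnected.swap (hE : StronglyConnected E) : StronglyConnected (swap E) :=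
  fun u v ↦ reflTransGen_swap.2 (hE v u)

theorem IsStrongOn.union_brokenEar {n j : ℕ} {p : ℕ → V} (hX : IsStrongOn E X) (hj : j < n)
    (h0 : p 0 ∈ X) (hn : p n ∈ X) (harc : ∀ i < n, i ≠ j → E (p i) (p (i + 1)))
    (hexit : p j ∈ X ∨ ∃ y ∈ X, E (p j) y)
    (hentry : p (j + 1) ∈ X ∨ ∃ y ∈ X, E y (p (j + 1))) :
    IsStrongOn E (X ∪ p '' Iic n) := by
  have hp (i : ℕ) (hi : i ≤ n) : p i ∈ X ∪ p '' Iic n := .inr ⟨i, hi, rfl⟩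
  have hseg {i k : ℕ} (hik : i ≤ k) (hk : k ≤ n) (hjik : j < i ∨ k ≤ j) :
      ReflTransGen (Induce E (X ∪ p '' Iic n)) (p i) (p k) :=
    reflTransGen_of_walk hik fun m _ _ ↦
      ⟨harc m (by lia) (by lia), hp m (by lia), hp (m + 1) (by lia)⟩
  refine hX.of_reach subset_union_left ?_ ?_
  · rintro _ (hx | ⟨i, hi : i ≤ n, rfl⟩)
    · exact ⟨_, hx, .refl⟩
    · rcases lt_or_ge j i with hji | hij
      · exact ⟨p n, hn, hseg hi le_rfl (.inl hji)⟩
      · rcases hexit with hjX | ⟨y, hy, hjy⟩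
        · exact ⟨p j, hjX, hseg hij hj.le (.inr le_rfl)⟩
        · exact ⟨y, hy, (hseg hij hj.le (.inr le_rfl)).tail ⟨hjy, hp j hj.le, .inl hy⟩⟩
  · rintro _ (hx | ⟨i, hi : i ≤ n, rfl⟩)
    · exact ⟨_, hx, .refl⟩
    · rcases lt_or_ge j i with hji | hij
      · rcases hentry with hjX | ⟨y, hy, hyj⟩
        · exact ⟨p (j + 1), hjX, hseg hji hi (.inl j.lt_succ_self)⟩
        · exact ⟨y, hy, (hseg hji hi (.inl j.lt_succ_self)).head ⟨hyj, .inl hy, hp (j + 1) hj⟩⟩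
      · exact ⟨p 0, h0, hseg i.zero_le hi (.inr hij)⟩

/-! ### Ears -/

/-- `p 0, …, p n` is an ear of the vertex set `X` in `E`: a walk whose ends are in `X` and whose
inner vertices, of which there is at least one, are distinct and outside `X`. The ends may coincide,
and the values `p i` with `n < i` are irrelevant. -/
structure IsEar (E : V → V → Prop) (X : Set V) (n : ℕ) (p : ℕ → V) : Prop where
  one_lt : 1 < n
  zero_mem : p 0 ∈ X
  last_mem : p n ∈ X
  arc : ∀ i < n, E (p i) (p (i + 1))
  inner_notMem : ∀ i, 0 < i → i < n → p i ∉ X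
  inner_injOn : InjOn p (Ioo 0 n)

theorem exists_isEar (hE : StronglyConnected E) (hXne : X.Nonempty) (hX : X ≠ univ) :
    ∃ n p, IsEar E X n p := by
  obtain ⟨x, hx⟩ := hXne
  obtain ⟨y, hy⟩ := (ne_univ_iff_exists_notMem X).1 hX
  obtain ⟨a, ha, b, hb, hab⟩ := exists_arc_mem_notMem (hE x y) hx hy
  obtain ⟨z, hz, hbz⟩ := exists_reflTransGen_first_mem (hE b a) ha
  obtain ⟨n, p, rfl, rfl, hp, hinj⟩ := exists_injOn_walk hbz
  have hn : n ≠ 0 := by rintro rfl; exact hb hz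
  refine ⟨n + 1, fun | 0 => a | i + 1 => p i, by lia, ha, hz, ?_, ?_, ?_⟩
  · rintro (_ | i) hi
    · exact hab
    · exact (hp i (by lia)).1
  · rintro (_ | i) hi0 hin
    · exact absurd hi0 (lt_irrefl 0)
    · exact (hp i (by lia)).2
  · rintro (_ | i) ⟨hi0, hin⟩ (_ | j) ⟨hj0, hjn⟩ hij
    · rfl
    · exact absurd hi0 (lt_irrefl 0)
    · exact absurd hj0 (lt_irrefl 0)
    · exact congrArg _ (hinj (show i ≤ n by lia) (show j ≤ n by lia) hij)

namespace IsEar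

variable {n : ℕ} {p : ℕ → V}

theorem injOn_Iio (hp : IsEar E X n p) : InjOn p (Iio n) := by
  intro i hi j hj hij
  rcases i.eq_zero_or_pos with rfl | hi0 <;> rcases j.eq_zero_or_pos with rfl | hj0
  · rfl
  · exact absurd (hij ▸ hp.zero_mem) (hp.inner_notMem j hj0 hj)
  · exact absurd (hij ▸ hp.zero_mem) (hp.inner_notMem i hi0 hi)
  · exact hp.inner_injOn ⟨hi0, hi⟩ ⟨hj0, hj⟩ hij

theorem injOn_Ioc (hp : IsEar E X n p) : InjOn p (Ioc 0 n) := by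
  rintro i ⟨hi0, hi⟩ j ⟨hj0, hj⟩ hij
  rcases hi.eq_or_lt with rfl | hin <;> rcases hj.eq_or_lt with rfl | hjn
  · rfl
  · exact absurd (hij ▸ hp.last_mem) (hp.inner_notMem j hj0 hjn)
  · exact absurd (hij ▸ hp.last_mem) (hp.inner_notMem i hi0 hin)
  · exact hp.inner_injOn ⟨hi0, hin⟩ ⟨hj0, hjn⟩ hij

theorem notMem_or_succ_notMem {i : ℕ} (hp : IsEar E X n p) (hi : i < n) :
    p i ∉ X ∨ p (i + 1) ∉ X := by
  rcases i.eq_zero_or_pos with rfl | hi0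
  · exact .inr (hp.inner_notMem 1 one_pos hp.one_lt)
  · exact .inl (hp.inner_notMem i hi0 hi)

theorem isStrongOn_union (hp : IsEar E X n p) (hX : IsStrongOn E X) :
    IsStrongOn E (X ∪ p '' Iic n) :=
  have hn : 0 < n := one_pos.trans hp.one_lt
  hX.union_brokenEar hn hp.zero_mem hp.last_mem (fun i hi _ ↦ hp.arc i hi) (.inl hp.zero_mem)
    (.inr ⟨p 0, hp.zero_mem, hp.arc 0 hn⟩)

end IsEar

/-- `p` is the last ear of an ear decomposition of `E` starting from the strong vertex set `W`:
an ear of a strong vertex set `X ⊇ W` that visits every vertex outside `X`. -/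
structure IsLastEar (E : V → V → Prop) (W X : Set V) (n : ℕ) (p : ℕ → V) : Prop
    extends IsEar E X n p where
  subset : W ⊆ X
  isStrongOn : IsStrongOn E X
  union_eq_univ : X ∪ p '' Iic n = univ

theorem exists_maximal_isStrongOn (hW : IsStrongOn E W) (hWuniv : W ≠ univ) (hfin : Wᶜ.Finite) :
    ∃ X, Maximal (fun X ↦ W ⊆ X ∧ X ≠ univ ∧ IsStrongOn E X) X := by
  have hsup : {X | W ⊆ X}.Finite := by
    simpa only [preimage_ofPred_eq, compl_subset_compl] using
      hfin.finite_subsets.preimage compl_injective.injOn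
  exact (hsup.subset fun X hX ↦ hX.1).exists_maximal ⟨W, subset_rfl, hWuniv, hW⟩

theorem exists_isLastEar (hE : StronglyConnected E) (hW : IsStrongOn E W) (hWne : W.Nonempty)
    (hWuniv : W ≠ univ) (hfin : Wᶜ.Finite) : ∃ X n p, IsLastEar E W X n p := by
  obtain ⟨X, hX⟩ := exists_maximal_isStrongOn hW hWuniv hfin
  obtain ⟨hWX, hXuniv, hXstrong⟩ := hX.prop
  obtain ⟨n, p, hp⟩ := exists_isEar hE (hWne.mono hWX) hXuniv
  refine ⟨X, n, p, hp, hWX, hXstrong, ?_⟩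
  by_contra hne
  have hle : X ∪ p '' Iic n ⊆ X :=
    hX.le_of_ge ⟨hWX.trans subset_union_left, hne, hp.isStrongOn_union hXstrong⟩ subset_union_left
  exact hp.inner_notMem 1 one_pos hp.one_lt (hle (.inr ⟨1, hp.one_lt.le, rfl⟩))

/-! ### Redundant arcs -/

/-- The digraph obtained from `A` by deleting all arcs of `F`. -/
def DelArcs (A F : V → V → Prop) : V → V → Prop :=
  fun x y ↦ A x y ∧ ¬F x y

/-- The digraph obtained from `A` by deleting the arc from `a` to `b`. -/
def DelArc (A : V → V → Prop) (a b : V) : V → V → Prop :=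
  DelArcs A fun x y ↦ x = a ∧ y = b

theorem IsStrongOn.delArc {a b : V} (hX : IsStrongOn E X) (hab : a ∉ X ∨ b ∉ X) :
    IsStrongOn (DelArc E a b) X := by
  refine hX.of_induce_le fun x y hxy ↦ ⟨hxy.1, ?_⟩
  rintro ⟨rfl, rfl⟩
  exact hab.elim (· hxy.2.1) (· hxy.2.2)

namespace IsLastEar

variable {n : ℕ} {p : ℕ → V}

theorem stronglyConnected_delArc_of_ne {a b : V} (hp : IsLastEar E W X n p)
    (hab : a ∉ X ∨ b ∉ X) (hne : ∀ i < n, p i = a → p (i + 1) ≠ b) :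
    StronglyConnected (DelArc E a b) := by
  have hp' : IsEar (DelArc E a b) X n p :=
    { hp.toIsEar with arc := fun i hi ↦ ⟨hp.arc i hi, fun h ↦ hne i hi h.1 h.2⟩ }
  rw [← isStrongOn_univ, ← hp.union_eq_univ]
  exact hp'.isStrongOn_union (hp.isStrongOn.delArc hab)

theorem stronglyConnected_delArc_of_bypass {j : ℕ} (hp : IsLastEar E W X n p) (hj : j < n)
    (hexit : j = 0 ∨ ∃ y ∈ X, y ≠ p (j + 1) ∧ E (p j) y)
    (hentry : j + 1 = n ∨ ∃ y ∈ X, y ≠ p j ∧ E y (p (j + 1))) :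
    StronglyConnected (DelArc E (p j) (p (j + 1))) := by
  rw [← isStrongOn_univ, ← hp.union_eq_univ]
  refine (hp.isStrongOn.delArc (hp.notMem_or_succ_notMem hj)).union_brokenEar hj hp.zero_mem
    hp.last_mem ?_ ?_ ?_
  · exact fun i hi hij ↦ ⟨hp.arc i hi, fun h ↦ hij (hp.injOn_Iio hi hj h.1)⟩
  · rcases hexit with rfl | ⟨y, hy, hne, hjy⟩
    · exact .inl hp.zero_mem
    · exact .inr ⟨y, hy, hjy, fun h ↦ hne h.2⟩
  · rcases hentry with rfl | ⟨y, hy, hne, hyj⟩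
    · exact .inl hp.last_mem
    · exact .inr ⟨y, hy, hyj, fun h ↦ hne h.1⟩

end IsLastEar

/-! ### A linear vertex on the last ear -/

theorem isLinear_of_unique_arcs {a b : V} (hin : ∀ y, E y v ↔ y = a) (hout : ∀ y, E v y ↔ y = b) :
    IsLinear E v := by
  simp only [IsLinear, indeg, outdeg, hin, hout, ofPred_eq_eq_singleton, ncard_singleton, and_self]

theorem exists_lt_and_succ {P Q : ℕ → Prop} {n : ℕ} (hn : 0 < n) (hP : P 0) (hQ : Q n)
    (h : ∀ i, 0 < i → i < n → P i ∨ Q i) : ∃ j < n, P j ∧ Q (j + 1) := by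
  by_contra! hPQ
  have hall : ∀ i < n, P i := by
    intro i hi
    induction i with
    | zero => exact hP
    | succ i ih =>
      exact (h (i + 1) i.succ_pos hi).resolve_right
        (hPQ i (i.lt_succ_self.trans hi) (ih (i.lt_succ_self.trans hi)))
  exact hPQ (n - 1) (by lia) (hall (n - 1) (by lia)) (by rwa [Nat.sub_add_cancel hn])

namespace IsEar

variable {n : ℕ} {p : ℕ → V}

theorem mem_of_forall_arc {i : ℕ} (hp : IsEar E X n p) (hS : Xᶜ ⊆ S)
    (hon : ∀ a ∈ S, ∀ b ∈ S, E a b → (a ∉ X ∨ b ∉ X) → ∃ i < n, p i = a ∧ p (i + 1) = b)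
    (hin : ∀ x ∉ X, ∃ y ∈ S, E y x) (hout : ∀ x ∉ X, ∃ y ∈ S, E x y) (hi : i ≤ n) : p i ∈ S := by
  have hn := hp.one_lt
  rcases i.eq_zero_or_pos with rfl | hi0
  · have h1 := hp.inner_notMem 1 one_pos hn
    obtain ⟨y, hyS, hy⟩ := hin _ h1
    obtain ⟨k, hk, rfl, hk1⟩ := hon y hyS _ (hS h1) hy (.inr h1)
    have : k + 1 = 1 := hp.injOn_Ioc ⟨k.succ_pos, hk⟩ ⟨one_pos, hn.le⟩ hk1
    obtain rfl : k = 0 := by lia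
    exact hyS
  rcases hi.eq_or_lt with rfl | hin'
  · have h1 := hp.inner_notMem (i - 1) (by lia) (by lia)
    obtain ⟨y, hyS, hy⟩ := hout _ h1
    obtain ⟨k, hk, hk1, rfl⟩ := hon _ (hS h1) y hyS hy (.inl h1)
    have : k = i - 1 := hp.injOn_Iio hk (show i - 1 < i by lia) hk1
    obtain rfl : k + 1 = i := by lia
    exact hyS
  · exact hS (hp.inner_notMem i hi0 hin')

theorem isLinear_of_forall_arc {i : ℕ} (hp : IsEar E X n p)
    (hon : ∀ a ∈ S, ∀ b ∈ S, E a b → (a ∉ X ∨ b ∉ X) → ∃ i < n, p i = a ∧ p (i + 1) = b)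
    (hi0 : 0 < i) (hi : i < n) (hiS : p i ∈ S)
    (hexit : ∀ y ∉ S, ¬E (p i) y) (hentry : ∀ y ∉ S, ¬E y (p i)) : IsLinear E (p i) := by
  have hiX := hp.inner_notMem i hi0 hi
  refine isLinear_of_unique_arcs (a := p (i - 1)) (b := p (i + 1)) (fun y ↦ ⟨fun hy ↦ ?_, ?_⟩)
    (fun y ↦ ⟨fun hy ↦ ?_, ?_⟩)
  · have hyS : y ∈ S := by_contra fun h ↦ hentry y h hy
    obtain ⟨k, hk, rfl, hki⟩ := hon y hyS _ hiS hy (.inr hiX)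
    have : k + 1 = i := hp.injOn_Ioc ⟨k.succ_pos, hk⟩ ⟨hi0, hi.le⟩ hki
    rw [← this, Nat.add_sub_cancel]
  · rintro rfl
    simpa only [Nat.sub_add_cancel hi0] using hp.arc (i - 1) (by lia)
  · have hyS : y ∈ S := by_contra fun h ↦ hexit y h hy
    obtain ⟨k, hk, hki, rfl⟩ := hon _ hiS y hyS hy (.inl hiX)
    rw [hp.injOn_Iio hk hi hki]
  · rintro rfl
    exact hp.arc i hi

end IsEar

theorem exists_isLinear_of_isStrongOn (hE : StronglyConnected E) (hW : IsStrongOn E W)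
    (hWne : W.Nonempty) (hWuniv : W ≠ univ) (hfin : Wᶜ.Finite) (hWS : Wᶜ ⊆ S)
    (hin : ∀ x ∉ W, ∃ y ∈ S, E y x) (hout : ∀ x ∉ W, ∃ y ∈ S, E x y)
    (hmin : ∀ a ∈ S, ∀ b ∈ S, E a b → (a ∉ W ∨ b ∉ W) → ¬StronglyConnected (DelArc E a b)) :
    ∃ v ∉ W, IsLinear E v := by
  obtain ⟨X, n, p, hp⟩ := exists_isLastEar hE hW hWne hWuniv hfin
  have hXW : ∀ x ∉ X, x ∉ W := fun x hx hxW ↦ hx (hp.subset hxW)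
  have hXS : Xᶜ ⊆ S := fun x hx ↦ hWS (hXW x hx)
  have hSX : ∀ y ∉ S, y ∈ X := fun y hy ↦ by_contra fun h ↦ hy (hXS h)
  have hminX : ∀ a ∈ S, ∀ b ∈ S, E a b → (a ∉ X ∨ b ∉ X) → ¬StronglyConnected (DelArc E a b) :=
    fun a ha b hb hab h ↦ hmin a ha b hb hab (h.imp (hXW a) (hXW b))
  have harc : ∀ a ∈ S, ∀ b ∈ S, E a b → (a ∉ X ∨ b ∉ X) → ∃ i < n, p i = a ∧ p (i + 1) = b := by
    intro a ha b hb hab habX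
    by_contra! hne
    exact hminX a ha b hb hab habX (hp.stronglyConnected_delArc_of_ne habX hne)
  have hpS : ∀ i ≤ n, p i ∈ S := fun i hi ↦
    hp.mem_of_forall_arc hXS harc (fun x hx ↦ hin x (hXW x hx)) (fun x hx ↦ hout x (hXW x hx)) hi
  by_contra! hlin
  have hnbr : ∀ i, 0 < i → i < n → (∃ y ∉ S, E (p i) y) ∨ ∃ y ∉ S, E y (p i) := by
    intro i hi0 hi
    by_contra! hno
    exact hlin (p i) (hXW _ (hp.inner_notMem i hi0 hi))
      (hp.isLinear_of_forall_arc harc hi0 hi (hpS i hi.le) hno.1 hno.2)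
  obtain ⟨j, hj, hexit, hentry⟩ := exists_lt_and_succ
    (P := fun i ↦ i = 0 ∨ ∃ y ∉ S, E (p i) y) (Q := fun i ↦ i = n ∨ ∃ y ∉ S, E y (p i))
    (one_pos.trans hp.one_lt) (.inl rfl) (.inl rfl)
    fun i hi0 hi ↦ (hnbr i hi0 hi).imp .inr .inr
  refine hminX _ (hpS j hj.le) _ (hpS (j + 1) hj) (hp.arc j hj) (hp.notMem_or_succ_notMem hj)
    (hp.stronglyConnected_delArc_of_bypass hj (hexit.imp_right ?_) (hentry.imp_right ?_))
  · exact fun ⟨y, hy, hjy⟩ ↦ ⟨y, hSX y hy, (ne_of_mem_of_not_mem (hpS (j + 1) hj) hy).symm, hjy⟩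
  · exact fun ⟨y, hy, hyj⟩ ↦ ⟨y, hSX y hy, (ne_of_mem_of_not_mem (hpS j hj.le) hy).symm, hyj⟩

/-! ### Contraction -/

/-- The contraction of the vertex set `W` in `A`. The vertices of `W` are kept and joined to each
other in both directions, which yields the same reachability relation as identifying them. -/
def Contract (A : V → V → Prop) (W : Set V) : V → V → Prop :=
  fun x y ↦ A x y ∨ (x ∈ W ∧ y ∈ W)

theorem swap_contract : swap (Contract A W) = Contract (swap A) W := by
  funext x y
  simp only [Contract, swap, and_comm]

theorem isStrongOn_contract : IsStrongOn (Contract A W) W :=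
  fun _ hx _ hy ↦ .single ⟨.inr ⟨hx, hy⟩, hx, hy⟩

theorem isLinear_contract_iff (hv : v ∉ W) : IsLinear (Contract A W) v ↔ IsLinear A v := by
  simp only [IsLinear, indeg, outdeg, Contract, hv, and_false, false_and, or_false]

/-! ### Strong components -/

theorem IsSC.reflTransGen (hS : IsSC A S) (hx : x ∈ S) (hy : y ∈ S) : ReflTransGen A x y := by
  obtain ⟨v, rfl⟩ := hS
  exact hx.2.trans hy.1

theorem IsSC.mem_of_reflTransGen (hS : IsSC A S) (hx : x ∈ S) (hy : y ∈ S)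
    (hxv : ReflTransGen A x v) (hvy : ReflTransGen A v y) : v ∈ S := by
  obtain ⟨u, rfl⟩ := hS
  exact ⟨hx.1.trans hxv, hvy.trans hy.2⟩

theorem IsSC.swap (hS : IsSC A S) : IsSC (swap A) S := by
  obtain ⟨v, rfl⟩ := hS
  exact ⟨v, by simp only [MutReach, reflTransGen_swap, and_comm]⟩

theorem IsSC.exists_arc_from (hS : IsSC A S) (hnontrivial : S.Nontrivial) (hx : x ∈ S) :
    ∃ y ∈ S, A x y := by
  obtain ⟨z, hz, hzx⟩ := hnontrivial.exists_ne x
  rcases (hS.reflTransGen hx hz).cases_head with rfl | ⟨y, hxy, hyz⟩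
  · exact absurd rfl hzx
  · exact ⟨y, hS.mem_of_reflTransGen hx hz (.single hxy) hyz, hxy⟩

theorem IsSC.exists_reflTransGen_of_contract (hS : IsSC (DelArcs A F) S) (hF : ∀ x y, F x y → x ∈ K)
    (hK : K.Nonempty) (hA : StronglyConnected A) (hBA : B ≤ A)
    (hB : ∀ x y, A x y → x ∉ S → B x y) (hcontract : StronglyConnected (Contract B (Sᶜ ∪ K)))
    (x : V) : ∃ k ∈ K, ReflTransGen B x k := by
  obtain ⟨k₀, hk₀⟩ := hK
  have hto_S (x : V) : ∃ t ∈ K ∪ S, ReflTransGen (DelArcs B F) x t := by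
    obtain ⟨t, ht, hxt⟩ := exists_reflTransGen_first_mem (X := K ∪ S) (hA x k₀) (.inl hk₀)
    refine ⟨t, ht, ReflTransGen.mono (fun a b ⟨hab, ha⟩ ↦ ⟨hB a b hab (ha <| .inr ·), ?_⟩) x t hxt⟩
    exact fun h ↦ ha (.inl (hF a b h))
  have hto_compl (x : V) : ∃ t ∈ Sᶜ ∪ K, ReflTransGen (DelArcs B F) x t := by
    obtain ⟨t, ht, hxt⟩ :=
      exists_reflTransGen_first_mem (X := Sᶜ ∪ K) (hcontract x k₀) (.inr hk₀)
    refine ⟨t, ht, ReflTransGen.mono (fun a b ⟨hab, ha⟩ ↦ ⟨?_, ?_⟩) x t hxt⟩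
    · exact hab.resolve_right fun h ↦ ha h.1
    · exact fun h ↦ ha (.inr (hF a b h))
  have hBD : ReflTransGen (DelArcs B F) ≤ ReflTransGen (DelArcs A F) :=
    ReflTransGen.mono fun a b h ↦ ⟨hBA a b h.1, h.2⟩
  obtain ⟨s, hs, hxs⟩ := hto_S x
  obtain ⟨t, ht, hst⟩ := hto_compl s
  obtain ⟨r, hr, htr⟩ := hto_S t
  have hreach {u : V} (hu : u ∈ K) (hxu : ReflTransGen (DelArcs B F) x u) :
      ∃ k ∈ K, ReflTransGen B x k :=
    ⟨u, hu, ReflTransGen.mono (fun _ _ h ↦ h.1) x u hxu⟩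
  rcases hs with hs | hs
  · exact hreach hs hxs
  rcases ht with ht | ht
  · rcases hr with hr | hr
    · exact hreach hr (hxs.trans (hst.trans htr))
    · exact absurd (hS.mem_of_reflTransGen hs hr (hBD s t hst) (hBD t r htr)) ht
  · exact hreach ht (hxs.trans hst)

theorem IsSC.stronglyConnected_of_contract (hS : IsSC (DelArcs A F) S)
    (hF : ∀ x y, F x y → x ∈ K ∧ y ∈ K) (hK : K.Nonempty) (hBK : IsStrongOn B K)
    (hA : StronglyConnected A) (hBA : B ≤ A) (hB : ∀ x y, A x y → (x ∉ S ∨ y ∉ S) → B x y)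
    (hcontract : StronglyConnected (Contract B (Sᶜ ∪ K))) : StronglyConnected B := by
  have hto (x : V) : ∃ k ∈ K, ReflTransGen B x k :=
    hS.exists_reflTransGen_of_contract (fun x y h ↦ (hF x y h).1) hK hA hBA
      (fun x y h hx ↦ hB x y h (.inl hx)) hcontract x
  have hfrom (x : V) : ∃ k ∈ K, ReflTransGen (Function.swap B) x k :=
    hS.swap.exists_reflTransGen_of_contract (F := Function.swap F) (fun x y h ↦ (hF y x h).2) hK
      hA.swap (fun x y ↦ hBA y x) (fun x y h hx ↦ hB y x h (.inr hx))
      (swap_contract ▸ hcontract.swap) x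
  intro u v
  obtain ⟨k, hk, huk⟩ := hto u
  obtain ⟨l, hl, hvl⟩ := hfrom v
  have hkl : ReflTransGen B k l := ReflTransGen.mono (fun _ _ h ↦ h.1) k l (hBK k hk l hl)
  exact huk.trans (hkl.trans (reflTransGen_swap.1 hvl))

theorem IsMSD.not_stronglyConnected_contract {a b : V} (hA : IsMSD A) (hFA : F ≤ A)
    (hF : ∀ x y, F x y → x ∈ K ∧ y ∈ K) (hK : K.Nonempty) (hFK : IsStrongOn F K)
    (hS : IsSC (DelArcs A F) S) (ha : a ∈ S) (hb : b ∈ S) (hab : A a b) (habK : a ∉ K ∨ b ∉ K) :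
    ¬StronglyConnected (Contract (DelArc A a b) (Sᶜ ∪ K)) := by
  refine fun h ↦ hA.2 a b hab (hS.stronglyConnected_of_contract hF hK ?_ hA.1 ?_ ?_ h)
  · refine hFK.of_induce_le fun x y hxy ↦ ⟨hFA x y hxy.1, ?_⟩
    rintro ⟨rfl, rfl⟩
    exact habK.elim (· hxy.2.1) (· hxy.2.2)
  · exact fun x y h ↦ h.1
  · refine fun x y hxy hxyS ↦ ⟨hxy, ?_⟩
    rintro ⟨rfl, rfl⟩
    exact hxyS.elim (· ha) (· hb)

/-- `F` and `K` are the arcs and the vertices of a strong subdigraph, which is the cycle `C_q` in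
`stmt6`. -/
theorem stmt6_general (hA : IsMSD A) (hFA : F ≤ A) (hF : ∀ x y, F x y → x ∈ K ∧ y ∈ K)
    (hK : K.Nonempty) (hFK : IsStrongOn F K) (hS : IsSC (DelArcs A F) S) (hfin : S.Finite)
    (hnontrivial : S.Nontrivial) (hone : (S ∩ K).Subsingleton) : ∃ v ∈ S, IsLinear A v := by
  have hmem {x : V} (hx : x ∉ Sᶜ ∪ K) : x ∈ S ∧ x ∉ K := by
    simpa only [mem_union, mem_compl_iff, not_or, not_not] using hx
  have hWuniv : Sᶜ ∪ K ≠ univ := by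
    intro h
    have hSK : S ⊆ K := fun x hx ↦ (eq_univ_iff_forall.1 h x).resolve_left (not_not.2 hx)
    exact hnontrivial.not_subsingleton (inter_eq_left.2 hSK ▸ hone)
  have hin : ∀ x ∉ Sᶜ ∪ K, ∃ y ∈ S, Contract A (Sᶜ ∪ K) y x := by
    intro x hx
    obtain ⟨y, hy, hyx⟩ := hS.swap.exists_arc_from hnontrivial (hmem hx).1
    exact ⟨y, hy, .inl hyx.1⟩
  have hout : ∀ x ∉ Sᶜ ∪ K, ∃ y ∈ S, Contract A (Sᶜ ∪ K) x y := by
    intro x hx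
    obtain ⟨y, hy, hxy⟩ := hS.exists_arc_from hnontrivial (hmem hx).1
    exact ⟨y, hy, .inl hxy.1⟩
  have hmin : ∀ a ∈ S, ∀ b ∈ S, Contract A (Sᶜ ∪ K) a b → (a ∉ Sᶜ ∪ K ∨ b ∉ Sᶜ ∪ K) →
      ¬StronglyConnected (DelArc (Contract A (Sᶜ ∪ K)) a b) := by
    intro a ha b hb hab habW hdel
    have hA_ab : A a b := hab.resolve_right fun h ↦ habW.elim (· h.1) (· h.2)
    refine hA.not_stronglyConnected_contract hFA hF hK hFK hS ha hb hA_ab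
      (habW.imp (hmem · |>.2) (hmem · |>.2)) (hdel.mono ?_)
    exact fun x y ⟨hxy, hne⟩ ↦ hxy.imp_left (⟨·, hne⟩)
  obtain ⟨v, hv, hlin⟩ := exists_isLinear_of_isStrongOn (hA.1.mono fun _ _ ↦ .inl)
    isStrongOn_contract (hK.mono subset_union_right) hWuniv (hfin.subset fun x hx ↦ (hmem hx).1)
    (fun x hx ↦ (hmem hx).1) hin hout hmin
  exact ⟨v, (hmem hv).1, (isLinear_contract_iff hv).1 hlin⟩

/-! ### The arcs of a cycle -/

/-- The arcs of the closed walk `c`, as a digraph on all of `V`. -/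
def CycleArc {q : ℕ} (c : ZMod q → V) : V → V → Prop :=
  fun x y ↦ ∃ i, x = c i ∧ y = c (i + 1)

theorem isStrongOn_cycleArc {q : ℕ} [NeZero q] (c : ZMod q → V) :
    IsStrongOn (CycleArc c) (range c) := by
  rintro _ ⟨i, rfl⟩ _ ⟨j, rfl⟩
  have h : ReflTransGen (Induce (CycleArc c) (range c))
      (c (i + (0 : ℕ))) (c (i + ((j - i).val : ℕ))) := by
    refine reflTransGen_of_walk (p := fun m : ℕ ↦ c (i + m)) (Nat.zero_le _) fun m _ _ ↦ ?_
    exact ⟨⟨i + m, rfl, by rw [Nat.cast_succ, add_assoc]⟩, ⟨_, rfl⟩, ⟨_, rfl⟩⟩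
  simpa using h

end

/-- Every non-trivial strong component of `D'` containing at most one vertex
of `C_q` contains a vertex that is linear in `D`. -/
theorem stmt6 {V : Type*} [Fintype V] (A : V → V → Prop) (q : ℕ) (c : ZMod q → V)
    (hMSD : IsMSD A) (hc : IsCycleIn A q c) (S : Set V) (hS : IsSC (DelCycle A q c) S)
    (hnontrivial : 1 < S.ncard) (hone : (S ∩ Set.range c).ncard ≤ 1) :
    ∃ v ∈ S, IsLinear A v := by
  have : NeZero q := ⟨by have := hc.1; lia⟩
  refine stmt6_general (F := CycleArc c) (K := range c) hMSD ?_ ?_ (range_nonempty c)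
    (isStrongOn_cycleArc c) hS S.toFinite (one_lt_ncard_iff_nontrivial.1 hnontrivial)
    (ncard_le_one_iff_subsingleton.1 hone)
  · rintro _ _ ⟨i, rfl, rfl⟩; exact hc.2.2 i
  · rintro _ _ ⟨i, rfl, rfl⟩; exact ⟨⟨i, rfl⟩, ⟨i + 1, rfl⟩⟩
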